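/- Let A be an admissible set of addition chains, let r ≥ 0 be a real number, and suppose Q ≥ 1 is an integer such that ν₂(n) ≤ Q for every positive integer n with δ^A(n) ≤ r. Then 𝒟^A ∩ [0, r] is a well-ordered subset of the real numbers with order type at least ω^⌊r⌋ and at most ω^(Q−1)·Q + ω^(Q−2)·(Q−1) + … + ω²·3 + ω·2 + 1, which is less than ω^(Q−1)·(Q+1) and hence less than ω^Q. The same upper and lower bounds hold for the order type of 𝒟^A_st ∩ [0, r]. -/

import Mathlib

/-- `c` is an addition chain: a nonempty list of positive integers starting at `1`
such that every later entry is the sum of two (not necessarily distinct) earlier entries. -/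
def IsAdditionChain (c : List ℕ) : Prop :=
  c.getD 0 0 = 1 ∧
    ∀ k, 0 < k → k < c.length →
      ∃ i j, i < k ∧ j < k ∧ c.getD k 0 = c.getD i 0 + c.getD j 0

/-- `c` is an addition chain whose last entry is `n`; its length is `c.length - 1`. -/
def IsAdditionChainFor (c : List ℕ) (n : ℕ) : Prop :=
  IsAdditionChain c ∧ c.getD (c.length - 1) 0 = n

/-- ν₂(n): the number of 1's in the binary expansion of `n`. -/
def binaryWeight (n : ℕ) : ℕ := (Nat.digits 2 n).sum

/-- `ℓ^A(n)`: the least length (number of steps, i.e. one less than the number of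
entries) of an addition chain for `n` belonging to the set `A` of addition chains. -/
noncomputable def chainLength (A : Set (List ℕ)) (n : ℕ) : ℕ :=
  sInf {r | ∃ c ∈ A, IsAdditionChainFor c n ∧ c.length = r + 1}

/-- A set `A` of addition chains is admissible if (i) every positive `n` has a chain
in `A` of length at most `⌊log₂ n⌋ + ν₂(n) - 1` (i.e. with at most
`⌊log₂ n⌋ + ν₂(n)` entries) and (ii) `ℓ^A(2n) ≤ ℓ^A(n) + 1` for all positive `n`. -/
def Admissible (A : Set (List ℕ)) : Prop :=
  (∀ n : ℕ, 0 < n → ∃ c ∈ A, IsAdditionChainFor c n ∧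
      c.length ≤ Nat.log 2 n + binaryWeight n) ∧
  ∀ n : ℕ, 0 < n → chainLength A (2 * n) ≤ chainLength A n + 1

/-- The A-defect `δ^A(n) = ℓ^A(n) - log₂ n`. -/
noncomputable def Adefect (A : Set (List ℕ)) (n : ℕ) : ℝ :=
  (chainLength A n : ℝ) - Real.logb 2 n

/-- `m` is A-stable if `ℓ^A(2^k m) = ℓ^A(m) + k` for all `k ≥ 0`. -/
def AStable (A : Set (List ℕ)) (m : ℕ) : Prop :=
  ∀ k : ℕ, chainLength A (2 ^ k * m) = chainLength A m + k

/-- `𝒟^A`: the set of all A-defect values. -/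
def defectSet (A : Set (List ℕ)) : Set ℝ :=
  {d | ∃ n : ℕ, 0 < n ∧ d = Adefect A n}

/-- `𝒟^A_st`: the set of all A-stable defects. -/
def stableDefectSet (A : Set (List ℕ)) : Set ℝ :=
  {d | ∃ n : ℕ, 0 < n ∧ AStable A n ∧ d = Adefect A n}

open scoped Classical in
/-- The order type of a well-ordered subset `S` of a linear order
(junk value `0` if `S` is not well-ordered, i.e. not `Set.IsWF`). -/
noncomputable def setOrderType {X : Type*} [LinearOrder X] (S : Set X) : Ordinal :=
  if h : S.IsWF then
    letI : WellFoundedLT S := ⟨h⟩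
    Ordinal.type ((· < ·) : S → S → Prop)
  else 0

/-- `ω^(Q-1)·Q + ω^(Q-2)·(Q-1) + … + ω²·3 + ω·2 + 1`. -/
noncomputable def boundSum : ℕ → Ordinal
  | 0 => 0
  | q + 1 => Ordinal.omega0 ^ (q : Ordinal) * (q + 1) + boundSum q

/-!
Write `ℓ(n) = ⌊log₂ n⌋ + s(n)`. Then `δ(n) = s(n) - log₂ (n / 2 ^ ⌊log₂ n⌋)`, where
`s(n) < ν₂(n)` by admissibility, so for each value of `s` the defects are ordered like the mantissas
in reverse.
Prepending a digit `1` and `b` digits `0` to the binary expansions of the numbers of weight at most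
`w` shrinks the set of their mantissas to a copy near `1`, and these copies descend to `1` as `b`
grows. Hence in reverse order the mantissas of weight at most `w + 1` form an `ω`-sequence of copies
of those of weight at most `w`, followed by the mantissa `1` of the powers of two.

For the upper bound, the defects up to `r` only involve weights at most `Q` and the `Q` values
`s < Q`, whose slices lie one above the other. For the lower bound, the mantissas of weight `k + 1`,
where `k = ⌊r⌋`, contain a copy of `ω ^ k` in reverse order. Multiplication by a power of two makes
each such number stable without changing its mantissa and weight; its `s` is then at most `k`, so
its defect is at most `k ≤ r`. By the pigeonhole principle, a copy of `ω ^ k` remains for some fixed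
value of `s`.
-/

/-! ### Order types of well-ordered sets -/

section OrderType

open Set

universe u

variable {X Y : Type u} [LinearOrder X] [LinearOrder Y] {S T : Set X} {α β : Ordinal.{u}}

/-- `S` is well-ordered of order type at most `α`. The first condition rules out the junk value `0`
of `setOrderType`, so that such bounds pass to subsets, images and unions of ascending blocks. -/
def OrderTypeLE (S : Set X) (α : Ordinal.{u}) : Prop :=
  S.IsWF ∧ setOrderType S ≤ α

/-- The sets `F i` lie one above the other, in the order of their indices. -/
def AscendingBlocks {ι : Type*} [LT ι] (F : ι → Set X) : Prop :=
  ∀ ⦃i j⦄, i < j → ∀ x ∈ F i, ∀ y ∈ F j, x < y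

theorem setOrderType_eq_type (S : Set X) [WellFoundedLT S] :
    setOrderType S = Ordinal.type ((· < ·) : S → S → Prop) :=
  dif_pos (IsWellFounded.wf : WellFounded ((· < ·) : S → S → Prop))

theorem orderTypeLE_iff_exists_strictMono :
    OrderTypeLE S α ↔ ∃ f : S → Ordinal.{u}, StrictMono f ∧ ∀ x, f x < α := by
  constructor
  · rintro ⟨hwf, hle⟩
    have : WellFoundedLT S := ⟨hwf⟩
    rw [setOrderType_eq_type] at hle
    exact ⟨Ordinal.typein (· < ·), fun x y hxy ↦ (Ordinal.typein_lt_typein _).2 hxy,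
      fun x ↦ (Ordinal.typein_lt_type _ x).trans_le hle⟩
  · rintro ⟨f, hf, hfα⟩
    have hwf : WellFoundedLT S := hf.wellFoundedLT
    have hg : StrictMono fun x ↦ Ordinal.ToType.mk (⟨f x, hfα x⟩ : Iio α) :=
      Ordinal.ToType.mk.strictMono.comp fun _ _ hxy ↦ hf hxy
    refine ⟨hwf.wf, ?_⟩
    rw [setOrderType_eq_type, ← Ordinal.type_toType α]
    exact Ordinal.type_le_iff'.2 ⟨(OrderEmbedding.ofStrictMono _ hg).ltEmbedding⟩

theorem orderTypeLE_empty (α : Ordinal.{u}) : OrderTypeLE (∅ : Set X) α :=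
  orderTypeLE_iff_exists_strictMono.2 ⟨fun _ ↦ 0, fun x ↦ isEmptyElim x, fun x ↦ isEmptyElim x⟩

namespace OrderTypeLE

theorem mono (hT : OrderTypeLE T α) (hST : S ⊆ T) : OrderTypeLE S α := by
  obtain ⟨f, hf, hfα⟩ := orderTypeLE_iff_exists_strictMono.1 hT
  exact orderTypeLE_iff_exists_strictMono.2
    ⟨f ∘ inclusion hST, hf.comp fun _ _ hxy ↦ hxy, fun _ ↦ hfα _⟩

theorem trans_le (hS : OrderTypeLE S α) (hαβ : α ≤ β) : OrderTypeLE S β :=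
  ⟨hS.1, hS.2.trans hαβ⟩

theorem image {g : X → Y} (hS : OrderTypeLE S α) (hg : StrictMonoOn g S) :
    OrderTypeLE (g '' S) α := by
  obtain ⟨f, hf, hfα⟩ := orderTypeLE_iff_exists_strictMono.1 hS
  exact orderTypeLE_iff_exists_strictMono.2
    ⟨f ∘ (hg.orderIso g S).symm, hf.comp (hg.orderIso g S).symm.strictMono, fun _ ↦ hfα _⟩

theorem insert_of_forall_lt {a : X} (hS : OrderTypeLE S α) (ha : ∀ x ∈ S, x < a) :
    OrderTypeLE (insert a S) (α + 1) := by
  classical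
  obtain ⟨f, hf, hfα⟩ := orderTypeLE_iff_exists_strictMono.1 hS
  refine orderTypeLE_iff_exists_strictMono.2
    ⟨fun x ↦ if hx : x.1 ∈ S then f ⟨x, hx⟩ else α, ?_, fun x ↦ ?_⟩
  · rintro ⟨x, rfl | hx⟩ ⟨y, rfl | hy⟩ hxy
    · exact absurd hxy (lt_irrefl _)
    · exact absurd hxy (ha y hy).not_gt
    · have hyS : y ∉ S := fun hy ↦ (ha y hy).false
      simpa only [hx, hyS, dite_true, dite_false] using hfα _
    · simpa only [hx, hy, dite_true] using hf hxy
  · simp only [Order.lt_add_one_iff]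
    split_ifs with hx
    exacts [(hfα _).le, le_rfl]

theorem iUnion {ι : Type u} [LinearOrder ι] [WellFoundedLT ι] {F : ι → Set X}
    (hF : ∀ i, OrderTypeLE (F i) α) (hasc : AscendingBlocks F) :
    OrderTypeLE (⋃ i, F i) (α * Ordinal.type ((· < ·) : ι → ι → Prop)) := by
  choose f hf hfα using fun i ↦ orderTypeLE_iff_exists_strictMono.1 (hF i)
  choose i hi using fun x : ⋃ i, F i ↦ mem_iUnion.1 x.2
  let e := Ordinal.typein ((· < ·) : ι → ι → Prop)
  have add_lt {γ : Ordinal.{u}} (x) (hγ : e (i x) < γ) :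
      α * e (i x) + f (i x) ⟨x, hi x⟩ < α * γ :=
    Ordinal.lt_mul_iff.2 ⟨_, hγ, _, hfα _ _, rfl⟩
  refine orderTypeLE_iff_exists_strictMono.2
    ⟨fun x ↦ α * e (i x) + f (i x) ⟨x, hi x⟩, fun x y hxy ↦ ?_,
      fun x ↦ add_lt x (Ordinal.typein_lt_type _ _)⟩
  rcases lt_trichotomy (i x) (i y) with hlt | heq | hgt
  · exact (add_lt x ((Ordinal.typein_lt_typein _).2 hlt)).trans_le le_self_add
  · have same_block {j k} (hjk : j = k) (hx : x.1 ∈ F j) (hy : y.1 ∈ F k) :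
        f j ⟨x, hx⟩ < f k ⟨y, hy⟩ := by
      subst hjk
      exact hf j hxy
    simp only [heq]
    gcongr
    exact same_block heq _ _
  · exact absurd hxy (hasc hgt _ (hi y) _ (hi x)).not_gt

end OrderTypeLE

theorem setOrderType_mono (hT : T.IsWF) (hST : S ⊆ T) : setOrderType S ≤ setOrderType T :=
  (OrderTypeLE.mono ⟨hT, le_rfl⟩ hST).2

theorem setOrderType_add_le_of_forall_lt (hST : (S ∪ T).IsWF) (hlt : ∀ x ∈ S, ∀ y ∈ T, x < y) :
    setOrderType S + setOrderType T ≤ setOrderType (S ∪ T) := by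
  have : WellFoundedLT ↥(S ∪ T) := ⟨hST⟩
  have : WellFoundedLT S := ⟨hST.mono subset_union_left⟩
  have : WellFoundedLT T := ⟨hST.mono subset_union_right⟩
  simp only [setOrderType_eq_type, ← Ordinal.type_sum_lex]
  refine Ordinal.type_le_iff'.2 ⟨RelEmbedding.ofMonotone
    (Sum.elim (inclusion subset_union_left) (inclusion subset_union_right)) ?_⟩
  rintro (x | x) (y | y) hxy
  · simpa using hxy
  · exact hlt x x.2 y y.2
  · simp at hxy
  · simpa using hxy

theorem mul_omega0_le_setOrderType_iUnion {F : ℕ → Set X} (hwf : (⋃ n, F n).IsWF)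
    (hF : ∀ n, α ≤ setOrderType (F n)) (hasc : AscendingBlocks F) :
    α * Ordinal.omega0 ≤ setOrderType (⋃ n, F n) := by
  have mul_natCast_le (n : ℕ) : α * n ≤ setOrderType (⋃ i < n, F i) := by
    induction n with
    | zero => simp
    | succ n ih =>
      have hsplit : ⋃ i < n + 1, F i = (⋃ i < n, F i) ∪ F n := biUnion_lt_succ F n
      have hwf' : ((⋃ i < n, F i) ∪ F n).IsWF :=
        hwf.mono (hsplit ▸ iUnion₂_subset fun i _ ↦ subset_iUnion F i)
      calc α * (n + 1 : ℕ) = α * n + α := by rw [Nat.cast_succ, mul_add_one]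
        _ ≤ setOrderType (⋃ i < n, F i) + setOrderType (F n) := add_le_add ih (hF n)
        _ ≤ setOrderType ((⋃ i < n, F i) ∪ F n) := by
          refine setOrderType_add_le_of_forall_lt hwf' fun x hx y hy ↦ ?_
          obtain ⟨i, hi, hxi⟩ := mem_iUnion₂.1 hx
          exact hasc hi x hxi y hy
        _ = setOrderType (⋃ i < n + 1, F i) := by rw [hsplit]
  rw [Ordinal.mul_le_iff_of_isSuccLimit Ordinal.isSuccLimit_omega0]
  intro b hb
  obtain ⟨n, rfl⟩ := Ordinal.lt_omega0.1 hb
  exact (mul_natCast_le n).trans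
    (setOrderType_mono hwf (iUnion₂_subset fun i _ ↦ subset_iUnion F i))

/-- `S` visibly contains a copy of `ω ^ k`: a point for `k = 0`, and an `ω`-sequence of ascending
copies of `ω ^ k` for `k + 1`. Unlike a bound on the order type, this structure passes to one of
the parts of a finite cover by a direct pigeonhole argument. -/
def ContainsOmegaPow : ℕ → Set X → Prop
  | 0, S => S.Nonempty
  | k + 1, S => ∃ F : ℕ → Set X,
      (∀ n, F n ⊆ S) ∧ (∀ n, ContainsOmegaPow k (F n)) ∧ AscendingBlocks F

namespace ContainsOmegaPow

theorem mono {k : ℕ} (hS : ContainsOmegaPow k S) (hST : S ⊆ T) : ContainsOmegaPow k T := by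
  cases k with
  | zero => exact Set.Nonempty.mono hST hS
  | succ k =>
    obtain ⟨F, hFS, hF⟩ := hS
    exact ⟨F, fun n ↦ (hFS n).trans hST, hF⟩

theorem image {k : ℕ} {g : X → Y} (hS : ContainsOmegaPow k S) (hg : StrictMonoOn g S) :
    ContainsOmegaPow k (g '' S) := by
  induction k generalizing S with
  | zero => exact Set.Nonempty.image g hS
  | succ k ih =>
    obtain ⟨F, hFS, hF, hasc⟩ := hS
    refine ⟨fun n ↦ g '' F n, fun n ↦ image_mono (hFS n),
      fun n ↦ ih (hF n) (hg.mono (hFS n)), ?_⟩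
    rintro m n hmn _ ⟨x, hx, rfl⟩ _ ⟨y, hy, rfl⟩
    exact hg (hFS m hx) (hFS n hy) (hasc hmn x hx y hy)

theorem exists_inter_of_subset_iUnion {ι : Type*} [Finite ι] {C : ι → Set X} {k : ℕ}
    (hS : ContainsOmegaPow k S) (hSC : S ⊆ ⋃ i, C i) : ∃ i, ContainsOmegaPow k (S ∩ C i) := by
  induction k generalizing S with
  | zero =>
    obtain ⟨x, hx⟩ := hS
    obtain ⟨i, hi⟩ := mem_iUnion.1 (hSC hx)
    exact ⟨i, x, hx, hi⟩
  | succ k ih =>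
    obtain ⟨F, hFS, hF, hasc⟩ := hS
    choose i hi using fun n ↦ ih (hF n) ((hFS n).trans hSC)
    obtain ⟨j, hj⟩ := Finite.exists_infinite_fiber i
    have hinf : {n | i n = j}.Infinite := infinite_coe_iff.1 hj
    refine ⟨j, fun n ↦ F (Nat.nth (i · = j) n) ∩ C j,
      fun n ↦ inter_subset_inter_left _ (hFS _), fun n ↦ ?_,
      fun m n hmn x hx y hy ↦ hasc (Nat.nth_strictMono hinf hmn) x hx.1 y hy.1⟩
    have hn : i (Nat.nth (i · = j) n) = j := Nat.nth_mem_of_infinite hinf n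
    simpa only [hn] using hi (Nat.nth (i · = j) n)

theorem opow_le_setOrderType {k : ℕ} (hS : ContainsOmegaPow k S) (hwf : S.IsWF) :
    Ordinal.omega0 ^ (k : Ordinal.{u}) ≤ setOrderType S := by
  induction k generalizing S with
  | zero =>
    have : WellFoundedLT S := ⟨hwf⟩
    have : Nonempty S := hS.to_subtype
    rw [Nat.cast_zero, Ordinal.opow_zero, setOrderType_eq_type, Order.one_le_iff_ne_zero]
    exact Ordinal.type_ne_zero_of_nonempty _
  | succ k ih =>
    obtain ⟨F, hFS, hF, hasc⟩ := hS
    have hwf' : (⋃ n, F n).IsWF := hwf.mono (iUnion_subset hFS)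
    calc Ordinal.omega0 ^ ((k + 1 : ℕ) : Ordinal.{u})
        = Ordinal.omega0 ^ (k : Ordinal.{u}) * Ordinal.omega0 := by
          rw [Nat.cast_succ, Ordinal.opow_add_one]
      _ ≤ setOrderType (⋃ n, F n) := mul_omega0_le_setOrderType_iUnion hwf'
          (fun n ↦ ih (hF n) (hwf.mono (hFS n))) hasc
      _ ≤ setOrderType S := setOrderType_mono hwf (iUnion_subset hFS)

end ContainsOmegaPow

end OrderType

/-! ### The ordinal bounds -/

section OrdinalBounds

open Ordinal

universe u

theorem omega0_opow_mul_natCast_lt (q n : ℕ) :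
    ω ^ (q : Ordinal.{u}) * n < ω ^ ((q + 1 : ℕ) : Ordinal.{u}) := by
  rw [Nat.cast_succ, opow_add_one]
  exact mul_lt_mul_of_pos_left (natCast_lt_omega0 n) (opow_pos _ omega0_pos)

theorem boundSum_lt_omega0_opow (q : ℕ) : boundSum.{u} q < ω ^ (q : Ordinal.{u}) := by
  induction q with
  | zero => simp [boundSum]
  | succ q ih =>
    calc boundSum.{u} (q + 1) = ω ^ (q : Ordinal.{u}) * (q + 1 : ℕ) + boundSum q := by
          rw [boundSum, Nat.cast_succ]
      _ < ω ^ (q : Ordinal.{u}) * (q + 1 : ℕ) + ω ^ (q : Ordinal.{u}) := by gcongr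
      _ = ω ^ (q : Ordinal.{u}) * (q + 2 : ℕ) := by rw [← mul_add_one, ← Nat.cast_succ]
      _ < ω ^ ((q + 1 : ℕ) : Ordinal.{u}) := omega0_opow_mul_natCast_lt q (q + 2)

theorem boundSum_succ_lt (q : ℕ) :
    boundSum.{u} (q + 1) < ω ^ (q : Ordinal.{u}) * ((q + 1 : ℕ) + 1) := by
  rw [boundSum, ← Nat.cast_succ, mul_add_one]
  exact (add_lt_add_iff_left _).2 (boundSum_lt_omega0_opow q)

/-- The bound for the order type of the mantissas of numbers of binary weight at most `w`: those of
weight at most `w + 1` form an `ω`-sequence of copies of those of weight at most `w`, followed by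
the mantissa of the powers of two. -/
noncomputable def mantissaBound : ℕ → Ordinal.{u}
  | 0 => 0
  | w + 1 => mantissaBound w * ω + 1

theorem one_add_omega0_opow_succ (q : ℕ) :
    1 + ω ^ ((q + 1 : ℕ) : Ordinal.{u}) = ω ^ ((q + 1 : ℕ) : Ordinal.{u}) :=
  add_omega0_opow (one_lt_opow.2 ⟨one_lt_omega0, Nat.cast_ne_zero.2 q.succ_ne_zero⟩)

theorem mantissaBound_add_two (q : ℕ) :
    mantissaBound.{u} (q + 2) = ω ^ ((q + 1 : ℕ) : Ordinal.{u}) + 1 := by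
  induction q with
  | zero => simp [mantissaBound]
  | succ q ih =>
    rw [mantissaBound, ih,
      add_mul_of_isSuccLimit (one_add_omega0_opow_succ q) isSuccLimit_omega0,
      ← opow_add_one, ← Nat.cast_succ]

theorem mantissaBound_mul_le_boundSum (w : ℕ) : mantissaBound.{u} w * w ≤ boundSum w := by
  match w with
  | 0 => simp
  | 1 => simp [mantissaBound, boundSum]
  | q + 2 =>
    have hpos : 0 < boundSum.{u} (q + 1) := by
      rw [boundSum, ← Nat.cast_succ]
      exact (mul_pos (opow_pos _ omega0_pos) (Nat.cast_pos'.2 q.succ_pos)).trans_le le_self_add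
    calc mantissaBound.{u} (q + 2) * (q + 2 : ℕ)
        = (ω ^ ((q + 1 : ℕ) : Ordinal.{u}) + 1) * ((q + 1 : ℕ) + 1) := by
          rw [mantissaBound_add_two, ← Nat.cast_succ]
      _ = ω ^ ((q + 1 : ℕ) : Ordinal.{u}) * ((q + 1 : ℕ) + 1) + 1 :=
          add_mul_add_one _ (one_add_omega0_opow_succ q)
      _ ≤ ω ^ ((q + 1 : ℕ) : Ordinal.{u}) * ((q + 1 : ℕ) + 1) + boundSum (q + 1) := by
          gcongr
          exact Order.one_le_iff_pos.2 hpos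
      _ = boundSum (q + 2) := rfl

end OrdinalBounds

/-! ### Mantissas and binary weight -/

section BinaryExpansion

open Set

theorem binaryWeight_two_pow_mul (k : ℕ) {n : ℕ} (hn : 0 < n) :
    binaryWeight (2 ^ k * n) = binaryWeight n := by
  rw [binaryWeight, Nat.digits_base_pow_mul one_lt_two hn]
  simp [binaryWeight]

theorem binaryWeight_two_pow_add {L n : ℕ} (hn : n < 2 ^ L) :
    binaryWeight (2 ^ L + n) = binaryWeight n + 1 := by
  have hlen : (Nat.digits 2 n).length ≤ L := (Nat.digits_length_le_iff one_lt_two n).2 hn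
  have hdigits := Nat.digits_append_zeroes_append_digits (b := 2) (n := n)
    (k := L - (Nat.digits 2 n).length) one_lt_two one_pos
  rw [Nat.add_sub_cancel' hlen, mul_one, add_comm] at hdigits
  rw [binaryWeight, ← hdigits]
  simp [binaryWeight]

theorem binaryWeight_pos {n : ℕ} (hn : 0 < n) : 0 < binaryWeight n :=
  (Nat.pos_of_ne_zero (Nat.getLast_digit_ne_zero 2 hn.ne')).trans_le
    (List.le_sum_of_mem (List.getLast_mem _))

theorem log_two_pow_mul (k : ℕ) {n : ℕ} (hn : 0 < n) :
    Nat.log 2 (2 ^ k * n) = Nat.log 2 n + k := by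
  induction k with
  | zero => simp
  | succ k ih =>
    rw [pow_succ, mul_right_comm, Nat.log_mul_base one_lt_two (by positivity), ih, add_assoc]

theorem lt_two_pow_log_add (b n : ℕ) : n < 2 ^ (Nat.log 2 n + b + 1) :=
  (Nat.lt_pow_succ_log_self one_lt_two n).trans_le (Nat.pow_le_pow_right two_pos (by omega))

theorem exists_two_pow_add {n : ℕ} (hn : 0 < n) : ∃ L m, m < 2 ^ L ∧ n = 2 ^ L + m := by
  obtain ⟨m, hm⟩ := Nat.exists_eq_add_of_le (Nat.pow_log_le_self 2 hn.ne')
  have hlt := Nat.lt_pow_succ_log_self one_lt_two n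
  rw [pow_succ] at hlt
  exact ⟨_, m, by omega, hm⟩

/-- The positive integers of binary weight exactly `w`. -/
def weightEq (w : ℕ) : Set ℕ := {n | 0 < n ∧ binaryWeight n = w}

/-- The positive integers of binary weight at most `w`. -/
def weightLE (w : ℕ) : Set ℕ := {n | 0 < n ∧ binaryWeight n ≤ w}

/-- Minus the mantissa `n / 2 ^ ⌊log₂ n⌋` of `n`. The sign makes defects increase with it. -/
noncomputable def negMantissa (n : ℕ) : ℝ := -(n / 2 ^ Nat.log 2 n)

theorem negMantissa_mem_Ioc {n : ℕ} (hn : 0 < n) : negMantissa n ∈ Ioc (-2 : ℝ) (-1) := by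
  have hpow : (0 : ℝ) < 2 ^ Nat.log 2 n := by positivity
  have hle : (2 : ℝ) ^ Nat.log 2 n ≤ n := mod_cast Nat.pow_log_le_self 2 hn.ne'
  have hlt : (n : ℝ) < 2 * 2 ^ Nat.log 2 n := by
    rw [← pow_succ']
    exact_mod_cast Nat.lt_pow_succ_log_self one_lt_two n
  exact ⟨neg_lt_neg ((div_lt_iff₀ hpow).2 hlt), neg_le_neg ((one_le_div₀ hpow).2 hle)⟩

theorem image_negMantissa_subset_Ioc {s : Set ℕ} (hs : ∀ n ∈ s, 0 < n) :
    negMantissa '' s ⊆ Ioc (-2) (-1) :=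
  image_subset_iff.2 fun n hn ↦ negMantissa_mem_Ioc (hs n hn)

theorem negMantissa_two_pow (L : ℕ) : negMantissa (2 ^ L) = -1 := by
  simp [negMantissa, Nat.log_pow]

theorem negMantissa_two_pow_mul (k : ℕ) {n : ℕ} (hn : 0 < n) :
    negMantissa (2 ^ k * n) = negMantissa n := by
  rw [negMantissa, negMantissa, log_two_pow_mul k hn, add_comm, pow_add]
  push_cast
  rw [mul_div_mul_left _ _ (by positivity)]

/-- The effect on the negated mantissa of prepending to a binary expansion a digit `1` followed by
`b` digits `0`. -/
noncomputable def prependOne (b : ℕ) (x : ℝ) : ℝ := -1 + x / 2 ^ (b + 1)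

theorem prependOne_strictMono (b : ℕ) : StrictMono (prependOne b) := fun x y hxy ↦ by
  unfold prependOne
  gcongr

theorem prependOne_lt_neg_one (b : ℕ) {x : ℝ} (hx : x < 0) : prependOne b x < -1 := by
  unfold prependOne
  linarith [div_neg_of_neg_of_pos hx (by positivity : (0 : ℝ) < 2 ^ (b + 1))]

theorem ascendingBlocks_prependOne_image {s : Set ℝ} (hs : s ⊆ Ioc (-2) (-1)) :
    AscendingBlocks fun b ↦ prependOne b '' s := by
  rintro b c hbc _ ⟨x, hx, rfl⟩ _ ⟨y, hy, rfl⟩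
  have hx := (hs hx).2
  have hy := (hs hy).1
  have hbc' : (2 : ℝ) * 2 ^ (b + 1) ≤ 2 ^ (c + 1) := by
    rw [← pow_succ']
    exact pow_le_pow_right₀ one_le_two (by omega)
  unfold prependOne
  gcongr -1 + ?_
  calc x / 2 ^ (b + 1) ≤ -1 / 2 ^ (b + 1) := by gcongr
    _ = -2 / (2 * 2 ^ (b + 1)) := by field_simp
    _ ≤ -2 / 2 ^ (c + 1) := by
      simp only [neg_div]
      gcongr
    _ < y / 2 ^ (c + 1) := by gcongr

theorem negMantissa_two_pow_add (b n : ℕ) :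
    negMantissa (2 ^ (Nat.log 2 n + b + 1) + n) = prependOne b (negMantissa n) := by
  have hlt := lt_two_pow_log_add b n
  have hlog : Nat.log 2 (2 ^ (Nat.log 2 n + b + 1) + n) = Nat.log 2 n + b + 1 :=
    Nat.log_eq_of_pow_le_of_lt_pow (Nat.le_add_right _ _) (by rw [pow_succ _ (_ + 1)]; omega)
  rw [negMantissa, hlog, negMantissa, prependOne, add_assoc, pow_add _ (Nat.log 2 n)]
  push_cast
  field_simp
  ring

theorem two_pow_add_mem_weightEq {w n : ℕ} (hn : n ∈ weightEq w) (b : ℕ) :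
    2 ^ (Nat.log 2 n + b + 1) + n ∈ weightEq (w + 1) :=
  ⟨by positivity, by rw [binaryWeight_two_pow_add (lt_two_pow_log_add b n), hn.2]⟩

theorem containsOmegaPow_image_negMantissa (k : ℕ) :
    ContainsOmegaPow k (negMantissa '' weightEq (k + 1)) := by
  induction k with
  | zero => exact ⟨_, 1, ⟨one_pos, by simp [binaryWeight]⟩, rfl⟩
  | succ k ih =>
    refine ⟨fun b ↦ prependOne b '' (negMantissa '' weightEq (k + 1)), fun b ↦ ?_,
      fun b ↦ ih.image ((prependOne_strictMono b).strictMonoOn _),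
      ascendingBlocks_prependOne_image (image_negMantissa_subset_Ioc fun n hn ↦ hn.1)⟩
    rintro _ ⟨_, ⟨n, hn, rfl⟩, rfl⟩
    exact ⟨_, two_pow_add_mem_weightEq hn b, negMantissa_two_pow_add b n⟩

theorem image_negMantissa_weightLE_succ_subset (w : ℕ) :
    negMantissa '' weightLE (w + 1) ⊆
      insert (-1) (⋃ b, prependOne b '' (negMantissa '' weightLE w)) := by
  rintro _ ⟨n, ⟨hn, hw⟩, rfl⟩
  obtain ⟨L, m, hlt, rfl⟩ := exists_two_pow_add hn
  rcases m.eq_zero_or_pos with rfl | hm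
  · exact Or.inl (negMantissa_two_pow L)
  · rw [binaryWeight_two_pow_add hlt, Nat.add_le_add_iff_right] at hw
    obtain ⟨b, rfl⟩ := Nat.exists_eq_add_of_lt (Nat.log_lt_of_lt_pow hm.ne' hlt)
    exact Or.inr (mem_iUnion.2 ⟨b, _, ⟨m, ⟨hm, hw⟩, rfl⟩, (negMantissa_two_pow_add b m).symm⟩)

theorem orderTypeLE_image_negMantissa (w : ℕ) :
    OrderTypeLE (negMantissa '' weightLE w) (mantissaBound w) := by
  induction w with
  | zero =>
    have hempty : weightLE 0 = ∅ :=
      eq_empty_of_forall_notMem fun n hn ↦ (binaryWeight_pos hn.1).not_ge hn.2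
    rw [hempty, image_empty]
    exact orderTypeLE_empty _
  | succ w ih =>
    have hsub := image_negMantissa_subset_Ioc fun n (hn : n ∈ weightLE w) ↦ hn.1
    have hblocks : OrderTypeLE (⋃ b, prependOne b '' (negMantissa '' weightLE w))
        (mantissaBound w * Ordinal.omega0) := by
      rw [← Ordinal.type_nat_lt]
      exact .iUnion (fun b ↦ ih.image ((prependOne_strictMono b).strictMonoOn _))
        (ascendingBlocks_prependOne_image hsub)
    refine (hblocks.insert_of_forall_lt fun x hx ↦ ?_).mono
      (image_negMantissa_weightLE_succ_subset w)
    obtain ⟨b, y, hy, rfl⟩ := mem_iUnion.1 hx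
    exact prependOne_lt_neg_one b ((hsub hy).2.trans_lt (by norm_num))

end BinaryExpansion

/-! ### Defects -/

section Defects

open Set

/-- The defect of a number with `s` small steps and negated mantissa `x`. -/
noncomputable def defectOf (s : ℕ) (x : ℝ) : ℝ := s - Real.logb 2 (-x)

theorem defectOf_strictMonoOn (s : ℕ) : StrictMonoOn (defectOf s) (Iio 0) := fun _ _ _ hy hxy ↦
  sub_lt_sub_left (Real.logb_lt_logb one_lt_two (neg_pos.2 hy) (neg_lt_neg hxy)) _

theorem defectOf_mem_Ioc (s : ℕ) {x : ℝ} (hx : x ∈ Ioc (-2 : ℝ) (-1)) :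
    defectOf s x ∈ Ioc (s - 1 : ℝ) s := by
  have hlt : Real.logb 2 (-x) < 1 :=
    (Real.logb_lt_iff_lt_rpow one_lt_two (by linarith [hx.2])).2
      (by linarith [hx.1, Real.rpow_one 2])
  have hnonneg : 0 ≤ Real.logb 2 (-x) := Real.logb_nonneg one_lt_two (by linarith [hx.2])
  exact ⟨sub_lt_sub_left hlt _, sub_le_self _ hnonneg⟩

theorem ascendingBlocks_defectOf_image {S : Set ℝ} (hS : S ⊆ Ioc (-2) (-1)) :
    AscendingBlocks fun s ↦ defectOf s '' S := by
  rintro s t hst _ ⟨x, hx, rfl⟩ _ ⟨y, hy, rfl⟩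
  have hst' : (s : ℝ) ≤ t - 1 := le_sub_iff_add_le.2 (mod_cast hst)
  exact ((defectOf_mem_Ioc s (hS hx)).2.trans hst').trans_lt (defectOf_mem_Ioc t (hS hy)).1

theorem IsAdditionChain.getD_le_two_pow {c : List ℕ} (hc : IsAdditionChain c) {k : ℕ}
    (hk : k < c.length) : c.getD k 0 ≤ 2 ^ k := by
  induction k using Nat.strong_induction_on with
  | _ k ih =>
    rcases k with _ | k
    · exact hc.1.le
    · obtain ⟨i, j, hi, hj, hsum⟩ := hc.2 (k + 1) k.succ_pos hk
      calc c.getD (k + 1) 0 = c.getD i 0 + c.getD j 0 := hsum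
        _ ≤ 2 ^ i + 2 ^ j := add_le_add (ih i hi (hi.trans hk)) (ih j hj (hj.trans hk))
        _ ≤ 2 ^ k + 2 ^ k := by gcongr <;> omega
        _ = 2 ^ (k + 1) := by rw [pow_succ, mul_two]

theorem IsAdditionChain.length_pos {c : List ℕ} (hc : IsAdditionChain c) : 0 < c.length :=
  List.length_pos_iff.2 fun h ↦ by simp [h, IsAdditionChain] at hc

theorem IsAdditionChainFor.le_two_pow {c : List ℕ} {n : ℕ} (hc : IsAdditionChainFor c n) :
    n ≤ 2 ^ (c.length - 1) :=
  hc.2 ▸ hc.1.getD_le_two_pow (Nat.sub_one_lt hc.1.length_pos.ne')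

/-- The number of small steps of a shortest chain in `A` for `n`, that is `ℓ^A(n) - ⌊log₂ n⌋`.
For admissible `A` the subtraction does not truncate, since a chain needs at least `⌊log₂ n⌋` steps
to reach `n`. -/
noncomputable def smallSteps (A : Set (List ℕ)) (n : ℕ) : ℕ := chainLength A n - Nat.log 2 n

namespace Admissible

variable {A : Set (List ℕ)} {n : ℕ}

theorem exists_length_eq_chainLength_add_one (hA : Admissible A) (hn : 0 < n) :
    ∃ c ∈ A, IsAdditionChainFor c n ∧ c.length = chainLength A n + 1 := by
  obtain ⟨c, hcA, hc, -⟩ := hA.1 n hn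
  exact Nat.sInf_mem (s := {l | ∃ c ∈ A, IsAdditionChainFor c n ∧ c.length = l + 1})
    ⟨c.length - 1, c, hcA, hc, (Nat.sub_add_cancel hc.1.length_pos).symm⟩

theorem le_two_pow_chainLength (hA : Admissible A) (hn : 0 < n) : n ≤ 2 ^ chainLength A n := by
  obtain ⟨c, -, hc, hlen⟩ := hA.exists_length_eq_chainLength_add_one hn
  simpa only [hlen, Nat.add_sub_cancel] using hc.le_two_pow

theorem chainLength_lt_log_add_binaryWeight (hA : Admissible A) (hn : 0 < n) :
    chainLength A n < Nat.log 2 n + binaryWeight n := by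
  obtain ⟨c, hcA, hc, hlen⟩ := hA.1 n hn
  have hle : chainLength A n ≤ c.length - 1 :=
    Nat.sInf_le ⟨c, hcA, hc, (Nat.sub_add_cancel hc.1.length_pos).symm⟩
  have := hc.1.length_pos
  omega

theorem chainLength_eq_log_add_smallSteps (hA : Admissible A) (hn : 0 < n) :
    chainLength A n = Nat.log 2 n + smallSteps A n := by
  refine (Nat.add_sub_of_le ?_).symm
  rw [← Nat.pow_le_pow_iff_right one_lt_two]
  exact (Nat.pow_log_le_self 2 hn.ne').trans (hA.le_two_pow_chainLength hn)

theorem smallSteps_lt_binaryWeight (hA : Admissible A) (hn : 0 < n) :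
    smallSteps A n < binaryWeight n := by
  have hlt := hA.chainLength_lt_log_add_binaryWeight hn
  rwa [hA.chainLength_eq_log_add_smallSteps hn, Nat.add_lt_add_iff_left] at hlt

theorem smallSteps_two_mul_le (hA : Admissible A) (hn : 0 < n) :
    smallSteps A (2 * n) ≤ smallSteps A n := by
  have hle := hA.2 n hn
  rw [hA.chainLength_eq_log_add_smallSteps hn,
    hA.chainLength_eq_log_add_smallSteps (mul_pos two_pos hn), mul_comm,
    Nat.log_mul_base one_lt_two hn.ne'] at hle
  rw [mul_comm]
  omega

theorem Adefect_eq_defectOf (hA : Admissible A) (hn : 0 < n) :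
    Adefect A n = defectOf (smallSteps A n) (negMantissa n) := by
  have hlogb : Real.logb 2 (-negMantissa n) = Real.logb 2 n - Nat.log 2 n := by
    rw [negMantissa, neg_neg, Real.logb_div (by positivity) (by positivity), Real.logb_pow,
      Real.logb_self_eq_one one_lt_two, mul_one]
  rw [Adefect, defectOf, hlogb, hA.chainLength_eq_log_add_smallSteps hn]
  push_cast
  ring

theorem Adefect_nonneg (hA : Admissible A) (hn : 0 < n) : 0 ≤ Adefect A n := by
  rw [Adefect, sub_nonneg, Real.logb_le_iff_le_rpow one_lt_two (mod_cast hn), Real.rpow_natCast]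
  exact_mod_cast hA.le_two_pow_chainLength hn

theorem Adefect_le_smallSteps (hA : Admissible A) (hn : 0 < n) :
    Adefect A n ≤ smallSteps A n :=
  hA.Adefect_eq_defectOf hn ▸ (defectOf_mem_Ioc _ (negMantissa_mem_Ioc hn)).2

theorem exists_aStable_two_pow_mul (hA : Admissible A) (hn : 0 < n) :
    ∃ j, AStable A (2 ^ j * n) := by
  have hanti : Antitone fun j ↦ smallSteps A (2 ^ j * n) := antitone_nat_of_succ_le fun j ↦ by
    rw [pow_succ', mul_assoc]
    exact hA.smallSteps_two_mul_le (by positivity)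
  obtain ⟨j, hj⟩ := WellFoundedLT.antitone_chain_condition hanti
  refine ⟨j, fun k ↦ ?_⟩
  have hsteps : smallSteps A (2 ^ k * (2 ^ j * n)) = smallSteps A (2 ^ j * n) := by
    rw [← mul_assoc, ← pow_add]
    exact (hj (k + j) (Nat.le_add_left _ _)).symm
  rw [hA.chainLength_eq_log_add_smallSteps (by positivity), hsteps,
    hA.chainLength_eq_log_add_smallSteps (by positivity), log_two_pow_mul k (by positivity),
    add_right_comm]

theorem orderTypeLE_defectSet (hA : Admissible A) {r : ℝ} {w : ℕ}
    (hw : ∀ n, 0 < n → Adefect A n ≤ r → binaryWeight n ≤ w) :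
    OrderTypeLE (defectSet A ∩ Icc 0 r) (boundSum w) := by
  have hIoc : negMantissa '' weightLE w ⊆ Ioc (-2) (-1) :=
    image_negMantissa_subset_Ioc fun _ hn ↦ hn.1
  have hneg : negMantissa '' weightLE w ⊆ Iio 0 := fun x hx ↦ (hIoc hx).2.trans_lt (by norm_num)
  have hslices : OrderTypeLE (⋃ s : Fin w, defectOf s '' (negMantissa '' weightLE w))
      (mantissaBound w * w) := by
    rw [← Ordinal.type_fin w]
    exact .iUnion
      (fun s ↦ (orderTypeLE_image_negMantissa w).image ((defectOf_strictMonoOn s).mono hneg))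
      fun s t hst ↦ ascendingBlocks_defectOf_image hIoc hst
  refine (hslices.trans_le (mantissaBound_mul_le_boundSum w)).mono ?_
  rintro _ ⟨⟨n, hn, rfl⟩, -, hnr⟩
  have hnw := hw n hn hnr
  exact mem_iUnion.2 ⟨⟨smallSteps A n, (hA.smallSteps_lt_binaryWeight hn).trans_le hnw⟩,
    _, ⟨n, ⟨hn, hnw⟩, rfl⟩, (hA.Adefect_eq_defectOf hn).symm⟩

theorem exists_defectOf_mem_stableDefectSet (hA : Admissible A) {k : ℕ}
    (hn : n ∈ weightEq (k + 1)) :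
    ∃ s : Fin (k + 1), defectOf s (negMantissa n) ∈ stableDefectSet A ∩ Icc 0 k := by
  obtain ⟨hpos, hweight⟩ := hn
  obtain ⟨j, hstable⟩ := hA.exists_aStable_two_pow_mul hpos
  have hpos' : 0 < 2 ^ j * n := by positivity
  have hsteps : smallSteps A (2 ^ j * n) < k + 1 := by
    rw [← hweight, ← binaryWeight_two_pow_mul j hpos]
    exact hA.smallSteps_lt_binaryWeight hpos'
  refine ⟨⟨_, hsteps⟩, ?_⟩
  rw [← negMantissa_two_pow_mul j hpos, ← hA.Adefect_eq_defectOf hpos']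
  exact ⟨⟨_, hpos', hstable, rfl⟩, hA.Adefect_nonneg hpos',
    (hA.Adefect_le_smallSteps hpos').trans (mod_cast Nat.le_of_lt_succ hsteps)⟩

theorem containsOmegaPow_stableDefectSet (hA : Admissible A) (k : ℕ) :
    ContainsOmegaPow k (stableDefectSet A ∩ Icc 0 (k : ℝ)) := by
  have hneg : negMantissa '' weightEq (k + 1) ⊆ Iio 0 := fun x hx ↦
    (image_negMantissa_subset_Ioc (fun _ hn ↦ hn.1) hx).2.trans_lt (by norm_num)
  obtain ⟨s, hs⟩ := (containsOmegaPow_image_negMantissa k).exists_inter_of_subset_iUnion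
    (C := fun s : Fin (k + 1) ↦ defectOf s ⁻¹' (stableDefectSet A ∩ Icc 0 k)) <| by
      rintro _ ⟨n, hn, rfl⟩
      exact mem_iUnion.2 (hA.exists_defectOf_mem_stableDefectSet hn)
  exact (hs.image ((defectOf_strictMonoOn s).mono (inter_subset_left.trans hneg))).mono
    (image_subset_iff.2 inter_subset_right)

end Admissible

theorem stableDefectSet_subset_defectSet (A : Set (List ℕ)) :
    stableDefectSet A ⊆ defectSet A := fun _ ⟨n, hn, _, hd⟩ ↦ ⟨n, hn, hd⟩

end Defects

/-- If every positive `n` with `δ^A(n) ≤ r` satisfies `ν₂(n) ≤ Q`, then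
`𝒟^A ∩ [0, r]` is well-ordered of order type at least `ω^⌊r⌋` and at most
`ω^(Q-1)·Q + … + ω²·3 + ω·2 + 1`, which is less than `ω^(Q-1)·(Q+1)` and hence less
than `ω^Q`; the same bounds hold for `𝒟^A_st ∩ [0, r]`. -/
theorem initial_segment_defectSet_orderType
    (A : Set (List ℕ)) (hA : Admissible A) (r : ℝ) (hr : 0 ≤ r)
    (Q : ℕ) (hQ1 : 1 ≤ Q)
    (hQ : ∀ n : ℕ, 0 < n → Adefect A n ≤ r → binaryWeight n ≤ Q) :
    (defectSet A ∩ Set.Icc 0 r).IsWF ∧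
    Ordinal.omega0 ^ ((⌊r⌋₊ : ℕ) : Ordinal) ≤ setOrderType (defectSet A ∩ Set.Icc 0 r) ∧
    setOrderType (defectSet A ∩ Set.Icc 0 r) ≤ boundSum Q ∧
    boundSum Q < Ordinal.omega0 ^ ((Q - 1 : ℕ) : Ordinal) * ((Q : Ordinal) + 1) ∧
    Ordinal.omega0 ^ ((Q - 1 : ℕ) : Ordinal) * ((Q : Ordinal) + 1) <
      Ordinal.omega0 ^ (Q : Ordinal) ∧
    (stableDefectSet A ∩ Set.Icc 0 r).IsWF ∧
    Ordinal.omega0 ^ ((⌊r⌋₊ : ℕ) : Ordinal) ≤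
      setOrderType (stableDefectSet A ∩ Set.Icc 0 r) ∧
    setOrderType (stableDefectSet A ∩ Set.Icc 0 r) ≤ boundSum Q := by
  have hstable := Set.inter_subset_inter_left (Set.Icc 0 r) (stableDefectSet_subset_defectSet A)
  have hupper := hA.orderTypeLE_defectSet hQ
  have hupper_stable := hupper.mono hstable
  have hlower_stable : ContainsOmegaPow ⌊r⌋₊ (stableDefectSet A ∩ Set.Icc 0 r) :=
    (hA.containsOmegaPow_stableDefectSet ⌊r⌋₊).mono
      (Set.inter_subset_inter_right _ (Set.Icc_subset_Icc_right (Nat.floor_le hr)))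
  have hlower := hlower_stable.mono hstable
  obtain ⟨q, rfl⟩ := Nat.exists_eq_add_of_le' hQ1
  exact ⟨hupper.1, hlower.opow_le_setOrderType hupper.1, hupper.2, boundSum_succ_lt q,
    mod_cast omega0_opow_mul_natCast_lt q (q + 2), hupper_stable.1,
    hlower_stable.opow_le_setOrderType hupper_stable.1, hupper_stable.2⟩
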